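/- For every predictor P, there exists a big tree B such that for all leakage traces k, k is a path in B if and only if P predicts k. (Together with the converse direction, big trees are exactly as expressive as predictors.) -/

import Mathlib

/-!
A predictor `P` unfolds corecursively to a big tree: the answer `P []` is the shape of the root, and
the subtree below an event `e` is the unfolding of the shifted predictor `fun k => P (e :: k)`.
Prediction obeys the same recursion (`predicts_nil`, `predicts_leak_cons`,
`predicts_compNonDet_cons`): `P` predicts `e :: k` iff `P []` is the answer matching `e` and the
shifted predictor predicts `k`. So paths and predicted traces agree by induction on the trace.
-/

universe u

inductive LeakageEvent (α : Type u) : Type u where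
  | Leak : α → LeakageEvent α
  | CompNonDet : α → LeakageEvent α

abbrev Trace (α : Type u) := List (LeakageEvent α)

inductive Qevent (α : Type u) : Type u where
  | qCompNonDet : Qevent α
  | qLeak : α → Qevent α
  | qEnd : Qevent α

abbrev Predictor (α : Type u) := Trace α → Qevent α

def Predicts {α : Type u} (P : Predictor α) (k : Trace α) : Prop :=
  (∀ k₁ x k₂, k = k₁ ++ [LeakageEvent.Leak x] ++ k₂ → P k₁ = Qevent.qLeak x) ∧
  (∀ k₁ x k₂, k = k₁ ++ [LeakageEvent.CompNonDet x] ++ k₂ → P k₁ = Qevent.qCompNonDet) ∧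
  P k = Qevent.qEnd

/-- Node shapes of a big tree: a leaf, a leak-`x` node, or a branch node. -/
inductive BigShape (α : Type u) : Type u where
  | leaf : BigShape α
  | leak : α → BigShape α
  | branch : BigShape α

/-- Children of each node shape: none for a leaf, one for a leak node,
`α`-indexed for a branch node. -/
def BigChild (α : Type u) : BigShape α → Type u
  | .leaf => PEmpty
  | .leak _ => PUnit
  | .branch => α

def BigTreeF (α : Type u) : PFunctor.{u} := ⟨BigShape α, BigChild α⟩

/-- Big trees: the coinductive type (M-type) of the polynomial functor above. -/
abbrev BigTree (α : Type u) := (BigTreeF α).M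

inductive BigPathIn {α : Type u} : Trace α → BigTree α → Prop where
  | nil {B : BigTree α} (h : (PFunctor.M.dest B).1 = BigShape.leaf) :
      BigPathIn [] B
  | leak {B : BigTree α} {k : Trace α} {x : α}
      (f : BigChild α (BigShape.leak x) → BigTree α)
      (h : PFunctor.M.dest B = ⟨BigShape.leak x, f⟩)
      (hp : BigPathIn k (f PUnit.unit)) :
      BigPathIn (LeakageEvent.Leak x :: k) B
  | branch {B : BigTree α} {k : Trace α} {x : α}
      (f : BigChild α BigShape.branch → BigTree α)
      (h : PFunctor.M.dest B = ⟨BigShape.branch, f⟩)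
      (hp : BigPathIn k (f x)) :
      BigPathIn (LeakageEvent.CompNonDet x :: k) B

/-- The predictor for the remainder of a trace whose first event is `e`. -/
def Predictor.shift {α : Type u} (P : Predictor α) (e : LeakageEvent α) : Predictor α :=
  fun k => P (e :: k)

/-- One layer of the unfolding of a predictor into a big tree. -/
def Predictor.step {α : Type u} (P : Predictor α) : (BigTreeF α) (Predictor α) :=
  match P [] with
  | .qEnd => ⟨BigShape.leaf, fun i => PEmpty.elim i⟩
  | .qLeak x => ⟨BigShape.leak x, fun _ => P.shift (.Leak x)⟩
  | .qCompNonDet => ⟨BigShape.branch, fun x => P.shift (.CompNonDet x)⟩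

/-- The big tree obtained by unfolding a predictor from the empty trace. -/
def Predictor.toBigTree {α : Type u} (P : Predictor α) : BigTree α :=
  PFunctor.M.corec Predictor.step P

theorem dest_toBigTree_end {α : Type u} {P : Predictor α} (h : P [] = .qEnd) :
    (PFunctor.M.dest P.toBigTree).1 = BigShape.leaf := by
  simp only [Predictor.toBigTree, PFunctor.M.dest_corec, Predictor.step, h]
  rfl

theorem dest_toBigTree_leak {α : Type u} {P : Predictor α} {x : α} (h : P [] = .qLeak x) :
    PFunctor.M.dest P.toBigTree =
      ⟨BigShape.leak x, fun _ => (P.shift (.Leak x)).toBigTree⟩ := by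
  simp only [Predictor.toBigTree, PFunctor.M.dest_corec, Predictor.step, h]
  rfl

theorem dest_toBigTree_compNonDet {α : Type u} {P : Predictor α} (h : P [] = .qCompNonDet) :
    PFunctor.M.dest P.toBigTree =
      ⟨BigShape.branch, fun x : α => (P.shift (.CompNonDet x)).toBigTree⟩ := by
  simp only [Predictor.toBigTree, PFunctor.M.dest_corec, Predictor.step, h]
  rfl

theorem predicts_nil {α : Type u} (P : Predictor α) : Predicts P [] ↔ P [] = .qEnd := by
  simp [Predicts]

theorem predicts_leak_cons {α : Type u} (P : Predictor α) (x : α) (k : Trace α) :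
    Predicts P (.Leak x :: k) ↔ P [] = .qLeak x ∧ Predicts (P.shift (.Leak x)) k := by
  constructor
  · rintro ⟨h₁, h₂, h₃⟩
    exact ⟨h₁ [] x k rfl, fun k₁ y k₂ h => h₁ (_ :: k₁) y k₂ (by simp [h]),
      fun k₁ y k₂ h => h₂ (_ :: k₁) y k₂ (by simp [h]), h₃⟩
  · rintro ⟨h₀, h₁, h₂, h₃⟩
    refine ⟨?_, ?_, h₃⟩
    · rintro (_ | ⟨e, k₁⟩) y k₂ h
      · simp at h
        rw [h₀, h.1]
      · simp at h
        obtain ⟨rfl, h⟩ := h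
        exact h₁ k₁ y k₂ (by simp [h])
    · rintro (_ | ⟨e, k₁⟩) y k₂ h
      · simp at h
      · simp at h
        obtain ⟨rfl, h⟩ := h
        exact h₂ k₁ y k₂ (by simp [h])

theorem predicts_compNonDet_cons {α : Type u} (P : Predictor α) (x : α) (k : Trace α) :
    Predicts P (.CompNonDet x :: k) ↔
      P [] = .qCompNonDet ∧ Predicts (P.shift (.CompNonDet x)) k := by
  constructor
  · rintro ⟨h₁, h₂, h₃⟩
    exact ⟨h₂ [] x k rfl, fun k₁ y k₂ h => h₁ (_ :: k₁) y k₂ (by simp [h]),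
      fun k₁ y k₂ h => h₂ (_ :: k₁) y k₂ (by simp [h]), h₃⟩
  · rintro ⟨h₀, h₁, h₂, h₃⟩
    refine ⟨?_, ?_, h₃⟩
    · rintro (_ | ⟨e, k₁⟩) y k₂ h
      · simp at h
      · simp at h
        obtain ⟨rfl, h⟩ := h
        exact h₁ k₁ y k₂ (by simp [h])
    · rintro (_ | ⟨e, k₁⟩) y k₂ h
      · exact h₀
      · simp at h
        obtain ⟨rfl, h⟩ := h
        exact h₂ k₁ y k₂ (by simp [h])

/-- The root shape of the unfolding determines the answer of the predictor on the empty trace. -/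
theorem shape_toBigTree {α : Type u} (P : Predictor α) :
    (PFunctor.M.dest P.toBigTree).1 =
      (match P [] with
        | .qEnd => BigShape.leaf
        | .qLeak x => BigShape.leak x
        | .qCompNonDet => BigShape.branch : BigShape α) := by
  cases h : P [] with
  | qEnd => exact dest_toBigTree_end h
  | qLeak x => rw [dest_toBigTree_leak h]
  | qCompNonDet => rw [dest_toBigTree_compNonDet h]

theorem bigPathIn_toBigTree {α : Type u} (k : Trace α) (P : Predictor α) :
    BigPathIn k P.toBigTree ↔ Predicts P k := by
  induction k generalizing P with
  | nil =>
    rw [predicts_nil]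
    refine ⟨fun h => ?_, fun h => .nil (dest_toBigTree_end h)⟩
    obtain ⟨h⟩ := h
    rw [shape_toBigTree] at h
    cases hP : P [] <;> simp_all
  | cons e k ih =>
    cases e with
    | Leak x =>
      rw [predicts_leak_cons, ← ih]
      refine ⟨fun h => ?_, fun h => .leak _ (dest_toBigTree_leak h.1) h.2⟩
      cases h with
      | leak f h hp =>
        have hs := shape_toBigTree P
        rw [h] at hs
        have hP : P [] = .qLeak x := by
          cases hP : P [] <;> rw [hP] at hs <;> cases hs
          rfl
        rw [dest_toBigTree_leak hP] at h
        cases h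
        exact ⟨hP, hp⟩
    | CompNonDet x =>
      rw [predicts_compNonDet_cons, ← ih]
      refine ⟨fun h => ?_, fun h => .branch _ (dest_toBigTree_compNonDet h.1) h.2⟩
      cases h with
      | branch f h hp =>
        have hs := shape_toBigTree P
        rw [h] at hs
        have hP : P [] = .qCompNonDet := by cases hP : P [] <;> simp_all
        rw [dest_toBigTree_compNonDet hP] at h
        cases h
        exact ⟨hP, hp⟩

theorem predictor_to_bigTree {α : Type u} (P : Predictor α) :
    ∃ B : BigTree α, ∀ k : Trace α, BigPathIn k B ↔ Predicts P k := by
  exact ⟨P.toBigTree, fun k => bigPathIn_toBigTree k P⟩
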